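/- Let ε = max_{s∈S} | ∑_{a∈A} π̃(a|s) A^π(s,a) |. Then for any two policies π and π̃, | η(π̃) − η(π) − L_π(π̃) | ≤ (2 ε γ / (1−γ)²) · ∑_{s∈S} d^π(s) · D_TV(π̃(·|s) ‖ π(·|s)). -/

import Mathlib

open scoped BigOperators

namespace PolicyOpt

/-- A finite Markov decision process. -/
structure MDP (S A : Type*) [Fintype S] [Fintype A] where
  p : S → A → S → ℝ
  r : S → A → ℝ
  γ : ℝ
  μ0 : S → ℝ
  p_nonneg : ∀ s a s', 0 ≤ p s a s'
  p_sum_one : ∀ s a, ∑ s', p s a s' = 1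
  μ0_nonneg : ∀ s, 0 ≤ μ0 s
  μ0_sum_one : ∑ s, μ0 s = 1
  γ_pos : 0 < γ
  γ_lt_one : γ < 1

variable {S A : Type*} [Fintype S] [Fintype A] [DecidableEq S] [DecidableEq A]

/-- A policy assigns to every state a probability distribution over actions. -/
def IsPolicy (π : S → A → ℝ) : Prop :=
  (∀ s a, 0 ≤ π s a) ∧ ∀ s, ∑ a, π s a = 1

/-- Trajectory prefixes (histories) consisting of `t+1` state-action pairs. -/
abbrev Hist (S A : Type*) (t : ℕ) := Fin (t + 1) → S × A

/-- Probability of a history of length `t+1` when following policy `π`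
starting from the initial distribution `μ0`. -/
noncomputable def prob (M : MDP S A) (π : S → A → ℝ) (t : ℕ) (h : Hist S A t) : ℝ :=
  (M.μ0 (h 0).1 * π (h 0).1 (h 0).2) *
    ∏ i : Fin t,
      (M.p (h i.castSucc).1 (h i.castSucc).2 (h i.succ).1 * π (h i.succ).1 (h i.succ).2)

/-- Probability of a history of length `t+1` when following policy `π`,
conditioned on starting in state `s` with first action `a`. -/
noncomputable def probFrom (M : MDP S A) (π : S → A → ℝ) (s : S) (a : A) (t : ℕ) (h : Hist S A t) : ℝ :=
  (if h 0 = (s, a) then (1 : ℝ) else 0) *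
    ∏ i : Fin t,
      (M.p (h i.castSucc).1 (h i.castSucc).2 (h i.succ).1 * π (h i.succ).1 (h i.succ).2)

/-- The last state-action pair of a history. -/
def lastSA {t : ℕ} (h : Hist S A t) : S × A := h (Fin.last t)

/-- State-action value `Q^π(s,a) = E_{τ∼π}[∑_{t≥0} γ^t r(s_t,a_t) | s₀=s, a₀=a]`. -/
noncomputable def Qval (M : MDP S A) (π : S → A → ℝ) (s : S) (a : A) : ℝ :=
  ∑' t : ℕ, M.γ ^ t * ∑ h : Hist S A t, probFrom M π s a t h * M.r (lastSA h).1 (lastSA h).2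

/-- State value `V^π(s)`. -/
noncomputable def Vval (M : MDP S A) (π : S → A → ℝ) (s : S) : ℝ :=
  ∑ a, π s a * Qval M π s a

/-- Advantage `A^π(s,a) = Q^π(s,a) - V^π(s)`. -/
noncomputable def Adv (M : MDP S A) (π : S → A → ℝ) (s : S) (a : A) : ℝ :=
  Qval M π s a - Vval M π s

/-- The value `η(π) = E_{τ∼π} ∑_{t≥0} γ^t r(s_t,a_t)`. -/
noncomputable def ηval (M : MDP S A) (π : S → A → ℝ) : ℝ :=
  ∑' t : ℕ, M.γ ^ t * ∑ h : Hist S A t, prob M π t h * M.r (lastSA h).1 (lastSA h).2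

/-- Normalised discounted state occupancy measure
`d^π(s) = (1-γ) ∑_{t≥0} γ^t Pr_{τ∼π}(s_t = s)`. -/
noncomputable def dOcc (M : MDP S A) (π : S → A → ℝ) (s : S) : ℝ :=
  (1 - M.γ) * ∑' t : ℕ, M.γ ^ t *
    ∑ h : Hist S A t, prob M π t h * (if (lastSA h).1 = s then (1 : ℝ) else 0)

/-- The surrogate objective `L_π(π') = (1/(1-γ)) ∑_s d^π(s) ∑_a π'(a|s) A^π(s,a)`. -/
noncomputable def Lsur (M : MDP S A) (π π' : S → A → ℝ) : ℝ :=
  (1 - M.γ)⁻¹ * ∑ s, dOcc M π s * ∑ a, π' s a * Adv M π s a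

/-- Product of importance sampling ratios `ρ_{0:t}` along a history. -/
noncomputable def ρprod (π π' : S → A → ℝ) {t : ℕ} (h : Hist S A t) : ℝ :=
  ∏ i, π' (h i).1 (h i).2 / π (h i).1 (h i).2

/-- Smoothed product of importance sampling ratios `ρ^{α}_{0:t}`. -/
noncomputable def ρpow (π π' : S → A → ℝ) {t : ℕ} (α : Fin (t + 1) → ℝ) (h : Hist S A t) : ℝ :=
  ∏ i, (π' (h i).1 (h i).2 / π (h i).1 (h i).2) ^ (α i)

/-- The prefix of length `t+1` of a history of length `T+1` (for `t ≤ T`). -/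
def pref {T : ℕ} (h : Hist S A T) (t : Fin (T + 1)) : Hist S A (t : ℕ) :=
  fun i => h (Fin.castLE t.isLt i)

/-!
The advantage of `π`, averaged over `π'`, is the Bellman residual `f - γ P' f` of `f = V' - V`,
where `P'` is the state chain of `π'`. The occupancy measure `d'` of `π'` satisfies the flow
equation `d' = (1 - γ) μ₀ + γ d' P'`, so pairing it with this residual gives the performance
difference `(1 - γ) (η' - η)`. The surrogate uses `d` in place of `d'`, and the error is therefore
at most `ε ‖d' - d‖₁ / (1 - γ)`. Subtracting the two flow equations yields
`d' - d = γ (d' - d) P' + γ d (P' - P)`; since `P'` contracts the `ℓ¹` norm, `‖d' - d‖₁` is at most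
`γ / (1 - γ)` times the `d`-average of `‖π' - π‖₁`.

Summing over discounted histories amounts to applying the resolvent `(1 - γ K)⁻¹` of the chain `K`
of state-action pairs; the flow and Bellman equations are its left and right expansions.
-/

open Matrix

section Matrix

variable {m n R : Type*} [Fintype m] [Fintype n]

lemma sum_path_weights [DecidableEq n] [CommSemiring R] (w : n → R) (K : Matrix n n R) (f : n → R)
    (t : ℕ) :
    ∑ h : Fin (t + 1) → n,
        (w (h 0) * ∏ i : Fin t, K (h i.castSucc) (h i.succ)) * f (h (Fin.last t)) =
      w ⬝ᵥ (K ^ t *ᵥ f) := by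
  induction t generalizing f with
  | zero =>
    rw [← (Equiv.funUnique (Fin 1) n).symm.sum_comp]
    simp [dotProduct]
  | succ t ih =>
    rw [pow_succ, ← mulVec_mulVec, ← ih, ← (Fin.snocEquiv fun _ => n).sum_comp,
      Fintype.sum_prod_type_right]
    refine Finset.sum_congr rfl fun h _ => ?_
    have snoc_zero (x : n) : Fin.snoc (α := fun _ => n) h x 0 = h 0 :=
      Fin.snoc_castSucc (α := fun _ => n) x h 0
    simp only [mulVec, dotProduct, Finset.mul_sum, Fin.snocEquiv, Equiv.coe_fn_mk,
      Fin.prod_univ_castSucc, ← Fin.castSucc_succ, Fin.succ_last, Fin.snoc_castSucc, Fin.snoc_last,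
      snoc_zero, mul_assoc]

lemma sum_abs_vecMul_le [Ring R] [LinearOrder R] [IsOrderedRing R]
    (v : m → R) (B : Matrix m n R) :
    ∑ j, |(v ᵥ* B) j| ≤ ∑ i, |v i| * ∑ j, |B i j| := calc
  ∑ j, |(v ᵥ* B) j| ≤ ∑ j, ∑ i, |v i * B i j| :=
    Finset.sum_le_sum fun _ _ => Finset.abs_sum_le_sum_abs _ _
  _ = ∑ i, |v i| * ∑ j, |B i j| := by
    rw [Finset.sum_comm]
    simp only [abs_mul, Finset.mul_sum]

lemma abs_dotProduct_le [Ring R] [LinearOrder R] [IsOrderedRing R]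
    (v : n → R) {w : n → R} {C : R} (hw : ∀ i, |w i| ≤ C) :
    |v ⬝ᵥ w| ≤ (∑ i, |v i|) * C := by
  refine (Finset.abs_sum_le_sum_abs _ _).trans ?_
  rw [Finset.sum_mul]
  refine Finset.sum_le_sum fun i _ => ?_
  rw [abs_mul]
  exact mul_le_mul_of_nonneg_left (hw i) (abs_nonneg _)

variable [DecidableEq n]

lemma sum_abs_vecMul_le_of_mem_rowStochastic [Ring R] [LinearOrder R] [IsOrderedRing R]
    {P : Matrix n n R} (hP : P ∈ rowStochastic R n) (v : n → R) :
    ∑ j, |(v ᵥ* P) j| ≤ ∑ i, |v i| := by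
  refine (sum_abs_vecMul_le v P).trans_eq ?_
  simp [abs_of_nonneg (nonneg_of_mem_rowStochastic hP), sum_row_of_mem_rowStochastic hP]

lemma inv_one_sub_mulVec [CommRing R] {B : Matrix n n R} (hB : IsUnit (1 - B)) (f : n → R) :
    (1 - B)⁻¹ *ᵥ f = f + B *ᵥ ((1 - B)⁻¹ *ᵥ f) := by
  have h : (1 - B) *ᵥ ((1 - B)⁻¹ *ᵥ f) = f := by
    rw [mulVec_mulVec, mul_nonsing_inv _ ((isUnit_iff_isUnit_det _).1 hB), one_mulVec]
  rw [sub_mulVec, one_mulVec] at h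
  exact sub_eq_iff_eq_add.1 h

lemma vecMul_inv_one_sub [CommRing R] {B : Matrix n n R} (hB : IsUnit (1 - B)) (w : n → R) :
    w ᵥ* (1 - B)⁻¹ = w + (w ᵥ* (1 - B)⁻¹) ᵥ* B := by
  have h : (w ᵥ* (1 - B)⁻¹) ᵥ* (1 - B) = w := by
    rw [vecMul_vecMul, nonsing_inv_mul _ ((isUnit_iff_isUnit_det _).1 hB), vecMul_one]
  rw [vecMul_sub, vecMul_one] at h
  exact sub_eq_iff_eq_add.1 h

open scoped Matrix.Norms.Operator

lemma hasSum_dotProduct_pow_mulVec [NormedCommRing R] [CompleteSpace R] {B : Matrix n n R}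
    (hB : ‖B‖ < 1) (w f : n → R) :
    HasSum (fun t : ℕ => w ⬝ᵥ (B ^ t *ᵥ f)) (w ⬝ᵥ ((1 - B)⁻¹ *ᵥ f)) := by
  let φ : Matrix n n R →+ R :=
    { toFun := fun N => w ⬝ᵥ (N *ᵥ f)
      map_zero' := by simp
      map_add' := fun N N' => by rw [add_mulVec, dotProduct_add] }
  have hφ : Continuous φ := by
    change Continuous fun N : Matrix n n R => w ⬝ᵥ (N *ᵥ f)
    fun_prop
  -- The operator norm induces the entrywise uniformity, but not reducibly so.
  have : @CompleteSpace (Matrix n n R) PseudoMetricSpace.toUniformSpace := instCompleteSpace n n R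
  rw [nonsing_inv_eq_ringInverse]
  exact (hasSum_geom_series_inverse B hB).map φ hφ

lemma linfty_opNorm_le_one_of_mem_rowStochastic {K : Matrix n n ℝ} (hK : K ∈ rowStochastic ℝ n) :
    ‖K‖ ≤ 1 := by
  rw [linfty_opNorm_def, NNReal.coe_le_one, Finset.sup_le_iff]
  intro i _
  rw [← NNReal.coe_le_coe]
  push_cast
  simp [Real.norm_of_nonneg (nonneg_of_mem_rowStochastic hK), sum_row_of_mem_rowStochastic hK]

lemma norm_smul_lt_one_of_mem_rowStochastic {K : Matrix n n ℝ} (hK : K ∈ rowStochastic ℝ n)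
    {γ : ℝ} (hγ : |γ| < 1) : ‖γ • K‖ < 1 := calc
  ‖γ • K‖ ≤ ‖γ‖ * ‖K‖ := norm_smul_le γ K
  _ ≤ ‖γ‖ :=
    mul_le_of_le_one_right (norm_nonneg γ) (linfty_opNorm_le_one_of_mem_rowStochastic hK)
  _ < 1 := hγ

lemma isUnit_one_sub_smul_of_mem_rowStochastic {K : Matrix n n ℝ} (hK : K ∈ rowStochastic ℝ n)
    {γ : ℝ} (hγ : |γ| < 1) : IsUnit (1 - γ • K) :=
  isUnit_one_sub_of_norm_lt_one (norm_smul_lt_one_of_mem_rowStochastic hK hγ)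

lemma tsum_discounted_path_weights {K : Matrix n n ℝ} (hK : K ∈ rowStochastic ℝ n)
    {γ : ℝ} (hγ : |γ| < 1) (w f : n → ℝ) :
    ∑' t : ℕ, γ ^ t * ∑ h : Fin (t + 1) → n,
        (w (h 0) * ∏ i : Fin t, K (h i.castSucc) (h i.succ)) * f (h (Fin.last t)) =
      w ⬝ᵥ ((1 - γ • K)⁻¹ *ᵥ f) := by
  rw [← (hasSum_dotProduct_pow_mulVec (norm_smul_lt_one_of_mem_rowStochastic hK hγ) w f).tsum_eq]
  refine tsum_congr fun t => ?_
  rw [sum_path_weights, smul_pow, smul_mulVec, dotProduct_smul, smul_eq_mul]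

end Matrix

/-- Transition matrix of the Markov chain of state-action pairs `(s_t, a_t)` under `π`. -/
def pairTransition (M : MDP S A) (π : S → A → ℝ) : Matrix (S × A) (S × A) ℝ :=
  of fun x y => M.p x.1 x.2 y.1 * π y.1 y.2

/-- Transition matrix of the Markov chain of states `s_t` under `π`. -/
def stateTransition (M : MDP S A) (π : S → A → ℝ) : Matrix S S ℝ :=
  of fun s => π s ᵥ* of (M.p s)

/-- Distribution of the first state-action pair `(s₀, a₀)` under `π`. -/
def initialPair (M : MDP S A) (π : S → A → ℝ) : S × A → ℝ :=
  fun x => M.μ0 x.1 * π x.1 x.2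

/-- The resolvent `(1 - γ K)⁻¹ = ∑_{t≥0} γ^t K^t` of the chain `K` of state-action pairs. The
`Matrix` inverse is `0` when `1 - γ K` is singular, which never happens for a policy `π`. -/
noncomputable def pairResolvent (M : MDP S A) (π : S → A → ℝ) : Matrix (S × A) (S × A) ℝ :=
  (1 - M.γ • pairTransition M π)⁻¹

/-- The normalised discounted occupancy measure of state-action pairs,
`(1-γ) ∑_{t≥0} γ^t Pr_{τ∼π}(s_t = s, a_t = a)`, with the series summed by the resolvent. -/
noncomputable def pairOcc (M : MDP S A) (π : S → A → ℝ) : S × A → ℝ :=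
  (1 - M.γ) • (initialPair M π ᵥ* pairResolvent M π)

/-- The advantage of `π` averaged over the actions of `π'`, written `Ā(s)` in the literature. -/
noncomputable def expectedAdv (M : MDP S A) (π π' : S → A → ℝ) (s : S) : ℝ :=
  ∑ a, π' s a * Adv M π s a

variable {M : MDP S A} {π π' : S → A → ℝ}

omit [DecidableEq S] [DecidableEq A] in
lemma MDP.abs_γ_lt_one (M : MDP S A) : |M.γ| < 1 := by
  rw [abs_of_pos M.γ_pos]
  exact M.γ_lt_one

omit [DecidableEq S] [DecidableEq A] in
lemma pairTransition_mulVec (q : S × A → ℝ) (x : S × A) :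
    (pairTransition M π *ᵥ q) x = ∑ s', M.p x.1 x.2 s' * ∑ a', π s' a' * q (s', a') := by
  simp only [pairTransition, mulVec, dotProduct, of_apply, Fintype.sum_prod_type, Finset.mul_sum,
    mul_assoc]

omit [DecidableEq S] [DecidableEq A] in
lemma stateTransition_mulVec (v : S → ℝ) (s : S) :
    (stateTransition M π *ᵥ v) s = ∑ a, π s a * ∑ s', M.p s a s' * v s' := by
  change (π s ᵥ* of (M.p s)) ⬝ᵥ v = _
  rw [← dotProduct_mulVec]
  rfl

lemma pairTransition_mem_rowStochastic (hπ : IsPolicy π) :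
    pairTransition M π ∈ rowStochastic ℝ (S × A) := by
  refine mem_rowStochastic.2
    ⟨fun x y => mul_nonneg (M.p_nonneg _ _ _) (hπ.1 _ _), funext fun x => ?_⟩
  simp [pairTransition_mulVec, hπ.2, M.p_sum_one]

omit [DecidableEq A] in
lemma stateTransition_mem_rowStochastic (hπ : IsPolicy π) :
    stateTransition M π ∈ rowStochastic ℝ S := by
  refine mem_rowStochastic.2 ⟨fun s s' => Finset.sum_nonneg fun a _ =>
    mul_nonneg (hπ.1 s a) (M.p_nonneg s a s'), funext fun s => ?_⟩
  simp [stateTransition_mulVec, hπ.2, M.p_sum_one]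

lemma isUnit_one_sub_smul_pairTransition (hπ : IsPolicy π) :
    IsUnit (1 - M.γ • pairTransition M π) :=
  isUnit_one_sub_smul_of_mem_rowStochastic (pairTransition_mem_rowStochastic hπ) M.abs_γ_lt_one

lemma tsum_discounted_prob (hπ : IsPolicy π) (f : S × A → ℝ) :
    ∑' t : ℕ, M.γ ^ t * ∑ h : Hist S A t, prob M π t h * f (lastSA h) =
      initialPair M π ⬝ᵥ (pairResolvent M π *ᵥ f) :=
  tsum_discounted_path_weights (pairTransition_mem_rowStochastic hπ) M.abs_γ_lt_one
    (initialPair M π) f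

lemma tsum_discounted_probFrom (hπ : IsPolicy π) (s : S) (a : A) (f : S × A → ℝ) :
    ∑' t : ℕ, M.γ ^ t * ∑ h : Hist S A t, probFrom M π s a t h * f (lastSA h) =
      (pairResolvent M π *ᵥ f) (s, a) := by
  rw [← single_one_dotProduct (s, a) (pairResolvent M π *ᵥ f), pairResolvent,
    ← tsum_discounted_path_weights (pairTransition_mem_rowStochastic hπ) M.abs_γ_lt_one]
  simp only [Pi.single_apply]
  rfl

lemma uncurry_Qval (hπ : IsPolicy π) :
    Function.uncurry (Qval M π) = pairResolvent M π *ᵥ Function.uncurry M.r :=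
  funext fun x => tsum_discounted_probFrom hπ x.1 x.2 (Function.uncurry M.r)

lemma Qval_bellman (hπ : IsPolicy π) (s : S) (a : A) :
    Qval M π s a = M.r s a + M.γ * ∑ s', M.p s a s' * Vval M π s' := by
  have h := inv_one_sub_mulVec (isUnit_one_sub_smul_pairTransition (M := M) hπ)
    (Function.uncurry M.r)
  rw [← pairResolvent, ← uncurry_Qval hπ, smul_mulVec] at h
  simpa [pairTransition_mulVec, Vval] using congrFun h (s, a)

lemma ηval_eq_dotProduct (hπ : IsPolicy π) : ηval M π = M.μ0 ⬝ᵥ Vval M π := by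
  refine (tsum_discounted_prob hπ (Function.uncurry M.r)).trans ?_
  rw [← uncurry_Qval hπ]
  simp only [initialPair, Vval, dotProduct, Fintype.sum_prod_type, Finset.mul_sum, mul_assoc,
    Function.uncurry]

lemma dOcc_eq_sum_pairOcc (hπ : IsPolicy π) (s : S) :
    dOcc M π s = ∑ a, pairOcc M π (s, a) := by
  rw [dOcc, tsum_discounted_prob hπ fun x => if x.1 = s then 1 else 0, dotProduct_mulVec]
  simp [pairOcc, dotProduct, Fintype.sum_prod_type, Finset.mul_sum]

lemma pairOcc_flow (hπ : IsPolicy π) :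
    pairOcc M π =
      (1 - M.γ) • initialPair M π + M.γ • (pairOcc M π ᵥ* pairTransition M π) := by
  conv_lhs => rw [pairOcc, pairResolvent,
    vecMul_inv_one_sub (isUnit_one_sub_smul_pairTransition hπ), ← pairResolvent]
  rw [pairOcc, vecMul_smul, smul_vecMul, smul_add, smul_comm]

lemma pairOcc_eq_inflow_mul (hπ : IsPolicy π) (s : S) (a : A) :
    pairOcc M π (s, a) =
      ((1 - M.γ) * M.μ0 s + M.γ * ∑ x, pairOcc M π x * M.p x.1 x.2 s) * π s a := by
  rw [congrFun (pairOcc_flow hπ) (s, a)]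
  simp only [initialPair, pairTransition, vecMul, dotProduct, Pi.add_apply, Pi.smul_apply,
    smul_eq_mul, of_apply, add_mul, mul_assoc, Finset.sum_mul]

lemma dOcc_eq_inflow (hπ : IsPolicy π) (s : S) :
    dOcc M π s = (1 - M.γ) * M.μ0 s + M.γ * ∑ x, pairOcc M π x * M.p x.1 x.2 s := by
  rw [dOcc_eq_sum_pairOcc hπ]
  simp only [pairOcc_eq_inflow_mul hπ s, ← Finset.mul_sum, hπ.2, mul_one]

lemma pairOcc_eq_dOcc_mul (hπ : IsPolicy π) (s : S) (a : A) :
    pairOcc M π (s, a) = dOcc M π s * π s a := by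
  rw [pairOcc_eq_inflow_mul hπ, ← dOcc_eq_inflow hπ]

omit [DecidableEq A] in
lemma dOcc_flow (hπ : IsPolicy π) :
    dOcc M π = (1 - M.γ) • M.μ0 + M.γ • (dOcc M π ᵥ* stateTransition M π) := by
  classical
  funext s
  rw [dOcc_eq_inflow hπ]
  simp only [Fintype.sum_prod_type, pairOcc_eq_dOcc_mul hπ, stateTransition, vecMul, dotProduct,
    Pi.add_apply, Pi.smul_apply, smul_eq_mul, of_apply, Finset.mul_sum, mul_assoc]

omit [DecidableEq A] in
lemma dOcc_dotProduct_sub (hπ : IsPolicy π) (f : S → ℝ) :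
    dOcc M π ⬝ᵥ (f - M.γ • (stateTransition M π *ᵥ f)) = (1 - M.γ) * M.μ0 ⬝ᵥ f := by
  have h := congrArg (· ⬝ᵥ f) (dOcc_flow (M := M) hπ)
  simp only [add_dotProduct, smul_dotProduct, ← dotProduct_mulVec, smul_eq_mul] at h
  rw [dotProduct_sub, dotProduct_smul, smul_eq_mul]
  linarith

omit [DecidableEq A] in
lemma dOcc_nonneg (hπ : IsPolicy π) (s : S) : 0 ≤ dOcc M π s := by
  have prob_nonneg (t : ℕ) (h : Hist S A t) : 0 ≤ prob M π t h :=
    mul_nonneg (mul_nonneg (M.μ0_nonneg _) (hπ.1 _ _))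
      (Finset.prod_nonneg fun _ _ => mul_nonneg (M.p_nonneg _ _ _) (hπ.1 _ _))
  refine mul_nonneg (sub_nonneg.2 M.γ_lt_one.le) (tsum_nonneg fun t =>
    mul_nonneg (pow_nonneg M.γ_pos.le t) (Finset.sum_nonneg fun h _ =>
      mul_nonneg (prob_nonneg t h) ?_))
  split_ifs <;> simp

lemma sum_mul_Qval (hπ : IsPolicy π) (s : S) :
    ∑ a, π' s a * Qval M π s a =
      ∑ a, π' s a * M.r s a + M.γ * (stateTransition M π' *ᵥ Vval M π) s := by
  simp only [Qval_bellman hπ, stateTransition_mulVec, mul_add, Finset.sum_add_distrib,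
    Finset.mul_sum, mul_left_comm M.γ]

lemma expectedAdv_eq_sub (hπ : IsPolicy π) (hπ' : IsPolicy π') :
    expectedAdv M π π' = (Vval M π' - Vval M π) -
      M.γ • (stateTransition M π' *ᵥ (Vval M π' - Vval M π)) := by
  funext s
  have hV' : Vval M π' s = _ := sum_mul_Qval hπ' s
  simp only [expectedAdv, Adv, mul_sub, Finset.sum_sub_distrib, ← Finset.sum_mul, hπ'.2, one_mul,
    sum_mul_Qval hπ, mulVec_sub, Pi.sub_apply, Pi.smul_apply, smul_eq_mul]
  linarith

lemma performance_difference (hπ : IsPolicy π) (hπ' : IsPolicy π') :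
    (1 - M.γ) * (ηval M π' - ηval M π) = dOcc M π' ⬝ᵥ expectedAdv M π π' := by
  rw [expectedAdv_eq_sub hπ hπ', dOcc_dotProduct_sub hπ', dotProduct_sub, ηval_eq_dotProduct hπ,
    ηval_eq_dotProduct hπ']

lemma surrogate_error_eq (hπ : IsPolicy π) (hπ' : IsPolicy π') :
    ηval M π' - ηval M π - Lsur M π π' =
      (1 - M.γ)⁻¹ * (dOcc M π' - dOcc M π) ⬝ᵥ expectedAdv M π π' := by
  have hγ : 1 - M.γ ≠ 0 := sub_ne_zero.2 M.γ_lt_one.ne'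
  have hL : Lsur M π π' = (1 - M.γ)⁻¹ * dOcc M π ⬝ᵥ expectedAdv M π π' := rfl
  rw [sub_dotProduct, mul_sub, ← performance_difference hπ hπ', inv_mul_cancel_left₀ hγ, hL]

omit [DecidableEq S] [DecidableEq A] in
lemma sum_abs_stateTransition_sub_le (s : S) :
    ∑ s', |(stateTransition M π' - stateTransition M π) s s'| ≤ ∑ a, |π' s a - π s a| := by
  have row_sub (s' : S) : (stateTransition M π' - stateTransition M π) s s' =
      ((π' s - π s) ᵥ* of (M.p s)) s' := by
    rw [sub_vecMul]
    rfl
  simp only [row_sub]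
  refine (sum_abs_vecMul_le _ _).trans_eq ?_
  simp [abs_of_nonneg (M.p_nonneg _ _ _), M.p_sum_one]

omit [DecidableEq A] in
lemma dOcc_sub_flow (hπ : IsPolicy π) (hπ' : IsPolicy π') :
    dOcc M π' - dOcc M π = M.γ • ((dOcc M π' - dOcc M π) ᵥ* stateTransition M π' +
      dOcc M π ᵥ* (stateTransition M π' - stateTransition M π)) := by
  conv_lhs => rw [dOcc_flow hπ, dOcc_flow hπ']
  rw [sub_vecMul, vecMul_sub, sub_add_sub_cancel, add_sub_add_left_eq_sub, smul_sub]

omit [DecidableEq A] in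
lemma sum_abs_dOcc_sub_le (hπ : IsPolicy π) (hπ' : IsPolicy π') :
    (1 - M.γ) * ∑ s, |dOcc M π' s - dOcc M π s| ≤
      M.γ * ∑ s, dOcc M π s * ∑ a, |π' s a - π s a| := by
  set δ := dOcc M π' - dOcc M π with hδ
  have contraction : ∑ s, |(δ ᵥ* stateTransition M π') s| ≤ ∑ s, |δ s| :=
    sum_abs_vecMul_le_of_mem_rowStochastic (stateTransition_mem_rowStochastic hπ') δ
  have perturbation :
      ∑ s, |(dOcc M π ᵥ* (stateTransition M π' - stateTransition M π)) s| ≤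
        ∑ s, dOcc M π s * ∑ a, |π' s a - π s a| := by
    refine (sum_abs_vecMul_le _ _).trans (Finset.sum_le_sum fun s _ => ?_)
    rw [abs_of_nonneg (dOcc_nonneg hπ s)]
    exact mul_le_mul_of_nonneg_left (sum_abs_stateTransition_sub_le s) (dOcc_nonneg hπ s)
  have self_bound : ∑ s, |δ s| ≤
      M.γ * (∑ s, |δ s| + ∑ s, dOcc M π s * ∑ a, |π' s a - π s a|) := calc
    ∑ s, |δ s| = M.γ * ∑ s, |(δ ᵥ* stateTransition M π' +
        dOcc M π ᵥ* (stateTransition M π' - stateTransition M π)) s| := by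
      conv_lhs => rw [hδ, dOcc_sub_flow hπ hπ', ← hδ]
      simp only [Pi.smul_apply, smul_eq_mul, abs_mul, abs_of_pos M.γ_pos, Finset.mul_sum]
    _ ≤ M.γ * (∑ s, |(δ ᵥ* stateTransition M π') s| +
        ∑ s, |(dOcc M π ᵥ* (stateTransition M π' - stateTransition M π)) s|) := by
      rw [← Finset.sum_add_distrib]
      gcongr
      · exact M.γ_pos.le
      · exact abs_add_le _ _
    _ ≤ _ := by
      gcongr
      exact M.γ_pos.le
  simp only [hδ, Pi.sub_apply] at self_bound
  linarith

/-- Achiam et al. style bound: `|η(π̃) − η(π) − L_π(π̃)| ≤ (2εγ/(1−γ)²) E_{s∼d^π} D_TV(π̃‖π)`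
with `ε = max_s |∑_a π̃(a|s) A^π(s,a)|`. -/
theorem surrogate_error_bound_expected_TV
    [Nonempty S]
    (M : MDP S A) (π π' : S → A → ℝ)
    (hπ : IsPolicy π) (hπ' : IsPolicy π')
    (ε : ℝ)
    (hε : ε = Finset.univ.sup' Finset.univ_nonempty fun s => |∑ a, π' s a * Adv M π s a|) :
    |ηval M π' - ηval M π - Lsur M π π'| ≤
      2 * ε * M.γ / (1 - M.γ) ^ 2 *
        ∑ s, dOcc M π s * ((1 / 2) * ∑ a, |π' s a - π s a|) := by
  have hγ : 0 < 1 - M.γ := sub_pos.2 M.γ_lt_one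
  have adv_le (s : S) : |expectedAdv M π π' s| ≤ ε :=
    hε ▸ Finset.le_sup' (fun s => |expectedAdv M π π' s|) (Finset.mem_univ s)
  have ε_nonneg : 0 ≤ ε := (abs_nonneg _).trans (adv_le (Classical.arbitrary S))
  have l1_le : ∑ s, |dOcc M π' s - dOcc M π s| ≤
      M.γ * (∑ s, dOcc M π s * ∑ a, |π' s a - π s a|) / (1 - M.γ) :=
    (le_div_iff₀' hγ).2 (sum_abs_dOcc_sub_le hπ hπ')
  calc |ηval M π' - ηval M π - Lsur M π π'|
      = (1 - M.γ)⁻¹ * |(dOcc M π' - dOcc M π) ⬝ᵥ expectedAdv M π π'| := by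
        rw [surrogate_error_eq hπ hπ', abs_mul, abs_of_pos (inv_pos.2 hγ)]
    _ ≤ (1 - M.γ)⁻¹ * ((∑ s, |dOcc M π' s - dOcc M π s|) * ε) := by
        gcongr
        exact abs_dotProduct_le _ adv_le
    _ ≤ (1 - M.γ)⁻¹ *
          (M.γ * (∑ s, dOcc M π s * ∑ a, |π' s a - π s a|) / (1 - M.γ) * ε) := by
        gcongr
    _ = _ := by
        simp only [mul_left_comm _ (1 / 2 : ℝ), ← Finset.mul_sum]
        field_simp

end PolicyOpt
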